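/- Assume the model equation y_t = μ* + Σ_{j=1}^p Σ_{k=0}^{l_j} φ*_{j,k} z_{j,k,t} W_j y_t + X_t β* + ε_t holds for every t = 1, …, T. Suppose the r×r matrix X^⊤ B^ν (B^ν)^⊤ X is invertible, and that the L×L matrix A^⊤A is invertible where A := B^⊤ V − Ξ Y_W. Then the least-squares estimator φ̃ := (A^⊤A)^{-1} A^⊤ (B^⊤ y − Ξ y^ν) satisfies the exact identity φ̃ − φ* = (A^⊤A)^{-1} A^⊤ (B^⊤ ε − Ξ ε^ν), where ε := vec((ε_1, …, ε_T)^⊤) and ε^ν := (ε_1^⊤, …, ε_T^⊤)^⊤. -/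

import Mathlib

open Matrix
open scoped Kronecker

noncomputable section

/-- `vec` of a matrix: the column vector obtained by stacking the columns. -/
def mvec {m n : Type*} (M : Matrix m n ℝ) : n × m → ℝ := fun p => M p.2 p.1

/-- A vector viewed as a column matrix. -/
def colMat {m : Type*} (v : m → ℝ) : Matrix m Unit ℝ := Matrix.of fun i _ => v i

/-- A vector viewed as a row matrix. -/
def rowMat {n : Type*} (v : n → ℝ) : Matrix Unit n ℝ := Matrix.of fun _ j => v j

/-- `B̄ := T⁻¹ Σ_t B_t`. -/
def Bbar {d T v : ℕ} (B : Fin T → Matrix (Fin d) (Fin v) ℝ) :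
    Matrix (Fin d) (Fin v) ℝ :=
  (T : ℝ)⁻¹ • ∑ t, B t

/-- `B^ν`: the vertical stack of the blocks `B_t − B̄`. -/
def Bnu {d T v : ℕ} (B : Fin T → Matrix (Fin d) (Fin v) ℝ) :
    Matrix (Fin T × Fin d) (Fin v) ℝ :=
  Matrix.of fun q s => (B q.1 - Bbar B) q.2 s

/-- `X`: the vertical stack of the matrices `X_t`. -/
def Xstack {d T r : ℕ} (X : Fin T → Matrix (Fin d) (Fin r) ℝ) :
    Matrix (Fin T × Fin d) (Fin r) ℝ :=
  Matrix.of fun q s => X q.1 q.2 s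

/-- The vertical stack `(w_1ᵀ, …, w_Tᵀ)ᵀ ∈ ℝ^{Td}` (used for `y^ν`, `ε^ν`). -/
def enu {d T : ℕ} (w : Fin T → Fin d → ℝ) : Fin T × Fin d → ℝ := fun q => w q.1 q.2

/-- `vec((w_1, …, w_T)ᵀ) ∈ ℝ^{Td}` (used for the vectorized `y` and `ε`). -/
def yvec {d T : ℕ} (w : Fin T → Fin d → ℝ) : Fin d × Fin T → ℝ := fun q => w q.2 q.1

/-- The `r × r` matrix `Xᵀ B^ν (B^ν)ᵀ X`. -/
def Gram {d T r v : ℕ} (X : Fin T → Matrix (Fin d) (Fin r) ℝ)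
    (B : Fin T → Matrix (Fin d) (Fin v) ℝ) : Matrix (Fin r) (Fin r) ℝ :=
  (Xstack X)ᵀ * Bnu B * (Bnu B)ᵀ * Xstack X

/-- The profiled least-squares coefficient `β(φ)`. -/
def betaOf {d T p r v : ℕ} (l : Fin p → ℕ) (W : Fin p → Matrix (Fin d) (Fin d) ℝ)
    (z : Fin T → (j : Fin p) → Fin (l j + 1) → ℝ)
    (y : Fin T → Fin d → ℝ) (X : Fin T → Matrix (Fin d) (Fin r) ℝ)
    (B : Fin T → Matrix (Fin d) (Fin v) ℝ)
    (φ : ((j : Fin p) × Fin (l j + 1)) → ℝ) : Fin r → ℝ :=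
  ((Gram X B)⁻¹ * (Xstack X)ᵀ * Bnu B * (Bnu B)ᵀ).mulVec
    (enu y - ∑ jk : (j : Fin p) × Fin (l j + 1),
      φ jk • ((1 : Matrix (Fin T) (Fin T) ℝ) ⊗ₖ W jk.1).mulVec
        (fun q : Fin T × Fin d => z q.1 jk.1 jk.2 * y q.1 q.2))

/-- `(I_T ⊗ γᵀ)(B₁ − B̄, …, B_T − B̄)ᵀ`, a `T × d` matrix. -/
def Gmat {d T v : ℕ} (B : Fin T → Matrix (Fin d) (Fin v) ℝ) (γ : Fin v → ℝ) :
    Matrix (Fin T) (Fin d) ℝ :=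
  Matrix.submatrix (((1 : Matrix (Fin T) (Fin T) ℝ) ⊗ₖ rowMat γ) *
      (Matrix.of fun i (q : Fin T × Fin v) => (B q.1 - Bbar B) i q.2)ᵀ)
    (fun t => (t, ())) id

/-- `B := κ · I_d ⊗ {(I_T ⊗ γᵀ)(B₁ − B̄, …, B_T − B̄)ᵀ}`, a `(Td) × d²` matrix. -/
def augB {d T v : ℕ} (B : Fin T → Matrix (Fin d) (Fin v) ℝ) (γ : Fin v → ℝ)
    (κ : ℝ) : Matrix (Fin d × Fin T) (Fin d × Fin d) ℝ :=
  κ • ((1 : Matrix (Fin d) (Fin d) ℝ) ⊗ₖ Gmat B γ)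

/-- `X_c := I_d ⊗ {(I_T ⊗ cᵀ)(X₁, …, X_T)ᵀ}`, a `(Td) × d²` matrix. -/
def augX {d T r : ℕ} (X : Fin T → Matrix (Fin d) (Fin r) ℝ) (c : Fin r → ℝ) :
    Matrix (Fin d × Fin T) (Fin d × Fin d) ℝ :=
  (1 : Matrix (Fin d) (Fin d) ℝ) ⊗ₖ
    Matrix.submatrix (((1 : Matrix (Fin T) (Fin T) ℝ) ⊗ₖ rowMat c) *
        (Matrix.of fun i (q : Fin T × Fin r) => X q.1 i q.2)ᵀ)
      (fun t => (t, ())) id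

/-- `vec(I_d)`. -/
def vecId (d : ℕ) : Fin d × Fin d → ℝ := mvec (1 : Matrix (Fin d) (Fin d) ℝ)

/-- `X_t ⊗ (B_t − B̄)γ`, a `d² × r` matrix. -/
def kronXB {d T r v : ℕ} (X : Fin T → Matrix (Fin d) (Fin r) ℝ)
    (B : Fin T → Matrix (Fin d) (Fin v) ℝ) (γ : Fin v → ℝ) (t : Fin T) :
    Matrix (Fin d × Fin d) (Fin r) ℝ :=
  Matrix.submatrix ((X t) ⊗ₖ colMat ((B t - Bbar B).mulVec γ)) id (fun s => (s, ()))

/-- `Ξ := κ (Σ_t X_t ⊗ (B_t − B̄)γ)(Xᵀ B^ν (B^ν)ᵀ X)⁻¹ Xᵀ B^ν (B^ν)ᵀ`. -/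
def Xi {d T r v : ℕ} (X : Fin T → Matrix (Fin d) (Fin r) ℝ)
    (B : Fin T → Matrix (Fin d) (Fin v) ℝ) (γ : Fin v → ℝ) (κ : ℝ) :
    Matrix (Fin d × Fin d) (Fin T × Fin d) ℝ :=
  κ • ((∑ t, kronXB X B γ t) * (Gram X B)⁻¹ * (Xstack X)ᵀ * Bnu B * (Bnu B)ᵀ)

/-- `Γ_{j,k} := I_d ⊗ (z_{j,k,1} y_1, …, z_{j,k,T} y_T)ᵀ` (for weights `w t = z_{j,k,t}`). -/
def Gamma {d T : ℕ} (w : Fin T → ℝ) (y : Fin T → Fin d → ℝ) :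
    Matrix (Fin d × Fin T) (Fin d × Fin d) ℝ :=
  (1 : Matrix (Fin d) (Fin d) ℝ) ⊗ₖ Matrix.of fun t i => w t * y t i

/-- `V`: the `(Td) × L` matrix whose `(j,k)`-th column is `Γ_{j,k} vec(W_jᵀ)`. -/
def Vmat {d T p : ℕ} (l : Fin p → ℕ) (W : Fin p → Matrix (Fin d) (Fin d) ℝ)
    (z : Fin T → (j : Fin p) → Fin (l j + 1) → ℝ) (y : Fin T → Fin d → ℝ) :
    Matrix (Fin d × Fin T) ((j : Fin p) × Fin (l j + 1)) ℝ :=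
  Matrix.of fun q c => (Gamma (fun t => z t c.1 c.2) y).mulVec (mvec (W c.1)ᵀ) q

/-- `Y_W`: the `(Td) × L` matrix whose `(j,k)`-th column is `(I_T ⊗ W_j) y^ν_{j,k}`. -/
def YW {d T p : ℕ} (l : Fin p → ℕ) (W : Fin p → Matrix (Fin d) (Fin d) ℝ)
    (z : Fin T → (j : Fin p) → Fin (l j + 1) → ℝ) (y : Fin T → Fin d → ℝ) :
    Matrix (Fin T × Fin d) ((j : Fin p) × Fin (l j + 1)) ℝ :=
  Matrix.of fun q c =>
    ((1 : Matrix (Fin T) (Fin T) ℝ) ⊗ₖ W c.1).mulVec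
      (fun q' : Fin T × Fin d => z q'.1 c.1 c.2 * y q'.1 q'.2) q


/-- `A := BᵀV − Ξ Y_W`, the design matrix of the profiled linear problem. -/
def Amat {d T p r v : ℕ} (l : Fin p → ℕ) (W : Fin p → Matrix (Fin d) (Fin d) ℝ)
    (z : Fin T → (j : Fin p) → Fin (l j + 1) → ℝ) (y : Fin T → Fin d → ℝ)
    (X : Fin T → Matrix (Fin d) (Fin r) ℝ)
    (B : Fin T → Matrix (Fin d) (Fin v) ℝ) (γ : Fin v → ℝ) (κ : ℝ) :
    Matrix (Fin d × Fin d) ((j : Fin p) × Fin (l j + 1)) ℝ :=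
  (augB B γ κ)ᵀ * Vmat l W z y - Xi X B γ κ * YW l W z y

lemma sum_sub_Bbar {d T v : ℕ} (hT : 0 < T) (B : Fin T → Matrix (Fin d) (Fin v) ℝ) :
    ∑ t, (B t - Bbar B) = 0 := by
  have hT' : (T : ℝ) ≠ 0 := by positivity
  simp [Finset.sum_sub_distrib, Bbar, ← Nat.cast_smul_eq_nsmul ℝ, smul_smul, hT']

lemma sum_sub_Bbar_apply {d T v : ℕ} (hT : 0 < T) (B : Fin T → Matrix (Fin d) (Fin v) ℝ)
    (i : Fin d) (s : Fin v) : ∑ t, (B t - Bbar B) i s = 0 := by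
  rw [← Matrix.sum_apply, sum_sub_Bbar hT, Matrix.zero_apply]

lemma Gmat_apply {d T v : ℕ} (B : Fin T → Matrix (Fin d) (Fin v) ℝ) (γ : Fin v → ℝ)
    (t : Fin T) (a : Fin d) : Gmat B γ t a = ((B t - Bbar B).mulVec γ) a := by
  simp [Gmat, Matrix.mul_apply, rowMat, Fintype.sum_prod_type, Matrix.one_apply,
    Matrix.mulVec, dotProduct, mul_comm]

lemma augB_transpose_mulVec_yvec_apply {d T v : ℕ} (B : Fin T → Matrix (Fin d) (Fin v) ℝ)
    (γ : Fin v → ℝ) (κ : ℝ) (w : Fin T → Fin d → ℝ) (i a : Fin d) :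
    (augB B γ κ)ᵀ.mulVec (yvec w) (i, a)
      = κ * ∑ t, ((B t - Bbar B).mulVec γ) a * w t i := by
  have hentry (k : Fin d) (t : Fin T) : augB B γ κ (k, t) (i, a)
      = if k = i then κ * ((B t - Bbar B).mulVec γ) a else 0 := by
    simp [augB, Gmat_apply, Matrix.one_apply]
  rw [Matrix.mulVec, dotProduct]
  simp only [Matrix.transpose_apply, Fintype.sum_prod_type_right, hentry, yvec, ite_mul, zero_mul,
    Finset.sum_ite_eq', Finset.mem_univ, if_true, Finset.mul_sum, mul_assoc]

lemma augB_transpose_mulVec_const {d T v : ℕ} (hT : 0 < T)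
    (B : Fin T → Matrix (Fin d) (Fin v) ℝ) (γ : Fin v → ℝ) (κ : ℝ) (m : Fin d → ℝ) :
    (augB B γ κ)ᵀ.mulVec (yvec fun _ => m) = 0 := by
  ext ⟨i, a⟩
  rw [augB_transpose_mulVec_yvec_apply, ← Finset.sum_mul, ← Finset.sum_apply,
    ← Matrix.sum_mulVec, sum_sub_Bbar hT]
  simp

lemma augB_transpose_mulVec_regressor {d T r v : ℕ} (X : Fin T → Matrix (Fin d) (Fin r) ℝ)
    (B : Fin T → Matrix (Fin d) (Fin v) ℝ) (γ : Fin v → ℝ) (κ : ℝ) (β : Fin r → ℝ) :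
    (augB B γ κ)ᵀ.mulVec (yvec fun t => (X t).mulVec β)
      = κ • (∑ t, kronXB X B γ t).mulVec β := by
  ext ⟨i, a⟩
  rw [augB_transpose_mulVec_yvec_apply, Pi.smul_apply, smul_eq_mul, Matrix.sum_mulVec,
    Finset.sum_apply]
  congr 1
  refine Finset.sum_congr rfl fun t _ => ?_
  simp only [kronXB, colMat, Matrix.mulVec, dotProduct, Matrix.submatrix_apply, id,
    Matrix.kroneckerMap_apply, Matrix.of_apply]
  rw [Finset.mul_sum]
  exact Finset.sum_congr rfl fun s _ => by ring

lemma Xi_mulVec_const {d T r v : ℕ} (hT : 0 < T) (X : Fin T → Matrix (Fin d) (Fin r) ℝ)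
    (B : Fin T → Matrix (Fin d) (Fin v) ℝ) (γ : Fin v → ℝ) (κ : ℝ) (m : Fin d → ℝ) :
    (Xi X B γ κ).mulVec (enu fun _ => m) = 0 := by
  have h : (Bnu B)ᵀ.mulVec (enu fun _ => m) = 0 := by
    ext s
    simp only [Matrix.mulVec, dotProduct, Matrix.transpose_apply, Bnu, Matrix.of_apply, enu,
      Fintype.sum_prod_type_right, ← Finset.sum_mul, sum_sub_Bbar_apply hT]
    simp
  rw [Xi, Matrix.smul_mulVec, ← Matrix.mulVec_mulVec, h, Matrix.mulVec_zero, smul_zero]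

lemma Xi_mulVec_regressor {d T r v : ℕ} (X : Fin T → Matrix (Fin d) (Fin r) ℝ)
    (B : Fin T → Matrix (Fin d) (Fin v) ℝ) (γ : Fin v → ℝ) (κ : ℝ)
    (hGram : IsUnit (Gram X B)) (β : Fin r → ℝ) :
    (Xi X B γ κ).mulVec (enu fun t => (X t).mulVec β)
      = κ • (∑ t, kronXB X B γ t).mulVec β := by
  have hX : (enu fun t => (X t).mulVec β) = (Xstack X).mulVec β := rfl
  have hinv : (Gram X B)⁻¹ * Gram X B = 1 :=
    Matrix.nonsing_inv_mul _ ((Matrix.isUnit_iff_isUnit_det _).mp hGram)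
  have hassoc : (∑ t, kronXB X B γ t) * (Gram X B)⁻¹ * (Xstack X)ᵀ * Bnu B * (Bnu B)ᵀ * Xstack X
      = (∑ t, kronXB X B γ t) * ((Gram X B)⁻¹ * Gram X B) := by
    simp only [Gram, Matrix.mul_assoc]
  rw [hX, Xi, Matrix.smul_mulVec, Matrix.mulVec_mulVec, hassoc, hinv, Matrix.mul_one]

lemma YW_apply {d T p : ℕ} (l : Fin p → ℕ) (W : Fin p → Matrix (Fin d) (Fin d) ℝ)
    (z : Fin T → (j : Fin p) → Fin (l j + 1) → ℝ) (y : Fin T → Fin d → ℝ)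
    (t : Fin T) (i : Fin d) (c : (j : Fin p) × Fin (l j + 1)) :
    YW l W z y (t, i) c = z t c.1 c.2 * (W c.1).mulVec (y t) i := by
  simp [YW, Matrix.mulVec, dotProduct, Fintype.sum_prod_type, Matrix.one_apply, ite_mul,
    Finset.mul_sum, mul_left_comm]

lemma Vmat_apply {d T p : ℕ} (l : Fin p → ℕ) (W : Fin p → Matrix (Fin d) (Fin d) ℝ)
    (z : Fin T → (j : Fin p) → Fin (l j + 1) → ℝ) (y : Fin T → Fin d → ℝ)
    (i : Fin d) (t : Fin T) (c : (j : Fin p) × Fin (l j + 1)) :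
    Vmat l W z y (i, t) c = z t c.1 c.2 * (W c.1).mulVec (y t) i := by
  simp [Vmat, Gamma, mvec, Matrix.mulVec, dotProduct, Fintype.sum_prod_type, Matrix.one_apply,
    Finset.mul_sum, mul_left_comm, mul_comm]

/-- under the model equation, the least-squares estimator
`φ̃ := (AᵀA)⁻¹ Aᵀ (Bᵀy − Ξ y^ν)` satisfies the exact identity
`φ̃ − φ* = (AᵀA)⁻¹ Aᵀ (Bᵀε − Ξ ε^ν)`. -/
theorem statement16 (d T p r v : ℕ) (hd : 0 < d) (hT : 0 < T) (hp : 0 < p)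
    (hr : 0 < r) (hv : 0 < v)
    (l : Fin p → ℕ) (W : Fin p → Matrix (Fin d) (Fin d) ℝ)
    (z : Fin T → (j : Fin p) → Fin (l j + 1) → ℝ) (hz : ∀ t j, z t j 0 = 1)
    (y ε : Fin T → Fin d → ℝ) (X : Fin T → Matrix (Fin d) (Fin r) ℝ)
    (B : Fin T → Matrix (Fin d) (Fin v) ℝ) (γ : Fin v → ℝ) (κ : ℝ) (hκ : κ ≠ 0)
    (μstar : Fin d → ℝ) (βstar : Fin r → ℝ)
    (φstar : (j : Fin p) → Fin (l j + 1) → ℝ)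
    (hmodel : ∀ t, y t = μstar
        + (∑ j, ∑ k, (φstar j k * z t j k) • (W j).mulVec (y t))
        + (X t).mulVec βstar + ε t)
    (hGram : IsUnit (Gram X B))
    (hA : IsUnit ((Amat l W z y X B γ κ)ᵀ * Amat l W z y X B γ κ)) :
    (((Amat l W z y X B γ κ)ᵀ * Amat l W z y X B γ κ)⁻¹ *
          (Amat l W z y X B γ κ)ᵀ).mulVec
        ((augB B γ κ)ᵀ.mulVec (yvec y) - (Xi X B γ κ).mulVec (enu y))
      - (fun jk => φstar jk.1 jk.2)
    = (((Amat l W z y X B γ κ)ᵀ * Amat l W z y X B γ κ)⁻¹ *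
          (Amat l W z y X B γ κ)ᵀ).mulVec
        ((augB B γ κ)ᵀ.mulVec (yvec ε) - (Xi X B γ κ).mulVec (enu ε)) := by
  set A := Amat l W z y X B γ κ with hAdef
  set φ : ((j : Fin p) × Fin (l j + 1)) → ℝ := fun jk => φstar jk.1 jk.2 with hφ
  have hentry (t : Fin T) (i : Fin d) : y t i = μstar i
      + (∑ c : (j : Fin p) × Fin (l j + 1), z t c.1 c.2 * (W c.1).mulVec (y t) i * φ c)
      + (X t).mulVec βstar i + ε t i := by
    conv_lhs => rw [hmodel t]
    simp only [Pi.add_apply, Finset.sum_apply, Pi.smul_apply, smul_eq_mul, Fintype.sum_sigma, hφ]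
    congr 3
    refine Finset.sum_congr rfl fun j _ => Finset.sum_congr rfl fun k _ => by ring
  have hyvec : yvec y = yvec (fun _ => μstar) + (Vmat l W z y).mulVec φ
      + yvec (fun t => (X t).mulVec βstar) + yvec ε := by
    ext ⟨i, t⟩
    simpa only [Pi.add_apply, yvec, Matrix.mulVec, dotProduct, Vmat_apply] using hentry t i
  have henu : enu y = enu (fun _ => μstar) + (YW l W z y).mulVec φ
      + enu (fun t => (X t).mulVec βstar) + enu ε := by
    ext ⟨t, i⟩
    simpa only [Pi.add_apply, enu, Matrix.mulVec, dotProduct, YW_apply] using hentry t i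
  have hresidual : (augB B γ κ)ᵀ.mulVec (yvec y) - (Xi X B γ κ).mulVec (enu y)
      = A.mulVec φ + ((augB B γ κ)ᵀ.mulVec (yvec ε) - (Xi X B γ κ).mulVec (enu ε)) := by
    rw [hyvec, henu]
    simp only [Matrix.mulVec_add, augB_transpose_mulVec_const hT, Xi_mulVec_const hT,
      augB_transpose_mulVec_regressor, Xi_mulVec_regressor X B γ κ hGram, hAdef, Amat,
      Matrix.sub_mulVec, Matrix.mulVec_mulVec]
    abel
  rw [hresidual, Matrix.mulVec_add, Matrix.mulVec_mulVec, Matrix.mul_assoc,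
    Matrix.nonsing_inv_mul _ ((Matrix.isUnit_iff_isUnit_det _).mp hA), Matrix.one_mulVec,
    add_sub_cancel_left]
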